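/- arXiv:2005.07906 — 4 statements merged into one kernel-verified Lean document; each statement's English description precedes it below -/
import Mathlib

section
/- For any tripartite 2-partition {T_1, T_2} of the complete graph K_5, there is a relabeling of the five vertices as v_1, …, v_5 (and possibly a swap of T_1 and T_2) such that E(T_1) is the edge set of the triangle on {v_1, v_2, v_3} and E(T_2) is the edge set of the complete tripartite graph with parts {v_1, v_2, v_3}, {v_4}, {v_5}. In other words, up to an automorphism of K_5 the tripartite 2-partition of K_5 is unique. -/
/-- The edge set of the complete tripartite subgraph of the complete graph on `V`
determined by the three pairwise disjoint parts `A`, `B`, `C`: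
all unordered pairs of vertices lying in two distinct parts. -/
def triEdges {V : Type*} (A B C : Set V) : Set (Sym2 V) :=
  {e | ∃ u v : V, e = s(u, v) ∧
    ((u ∈ A ∧ v ∈ B) ∨ (u ∈ A ∧ v ∈ C) ∨ (u ∈ B ∧ v ∈ C))}

/-!
Write `G` for the graph with edge set `E(T₁)`, so that `E(T₂)` is the edge set of `Gᶜ`. A vertex
isolated in one of the two graphs is joined to everything in the other, so one of them, say `Gᶜ`,
has no isolated vertex. Two nonadjacent vertices `u`, `v` in the support of `G` would have a common
neighbour `w` in `G`; then `w` is in the same part of `Gᶜ` as `u` and as `v`, yet `u` and `v` are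
adjacent in `Gᶜ`. So `G` is a clique on its support `S`. Since `Sᶜ` together with any vertex of `S`
is a clique of `Gᶜ`, and cliques of tripartite graphs have at most three vertices, `|S| ≤ 3` and
`|Sᶜ| ≤ 2`; five vertices force equality.
-/

section CliqueOnSupport

variable {V : Type*} {G : SimpleGraph V}

theorem support_eq_univ_or_support_compl_eq_univ [Nontrivial V] (G : SimpleGraph V) :
    G.support = Set.univ ∨ Gᶜ.support = Set.univ := by
  refine or_iff_not_imp_left.2 fun hG => ?_
  obtain ⟨x, hx⟩ := (Set.ne_univ_iff_exists_notMem _).1 hG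
  have compl_adj_x : ∀ y, x ≠ y → Gᶜ.Adj x y := fun y hxy =>
    (G.compl_adj x y).2 ⟨hxy, fun h => hx h.mem_support_left⟩
  refine Set.eq_univ_of_forall fun y => ?_
  by_cases hxy : x = y
  · obtain ⟨z, hz⟩ := exists_ne x
    exact hxy ▸ (compl_adj_x z hz.symm).mem_support_left
  · exact (compl_adj_x y hxy).mem_support_right

theorem isCompleteMultipartite_of_support_eq_univ
    (hG : (G.induce G.support).IsCompleteMultipartite) (hs : G.support = Set.univ) :
    G.IsCompleteMultipartite := by
  have mem_support : ∀ v, v ∈ G.support := Set.eq_univ_iff_forall.1 hs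
  exact ⟨fun u v w => hG.trans ⟨u, mem_support u⟩ ⟨v, mem_support v⟩ ⟨w, mem_support w⟩⟩

theorem isClique_support_of_isCompleteMultipartite
    (hG : (G.induce G.support).IsCompleteMultipartite) (hGc : Gᶜ.IsCompleteMultipartite) :
    G.IsClique G.support := by
  intro u hu v hv huv
  by_contra h_not_adj
  obtain ⟨w, huw⟩ := G.mem_support.1 hu
  have hwv : G.Adj w v := by
    by_contra hwv
    exact hG.trans ⟨u, hu⟩ ⟨v, hv⟩ ⟨w, huw.mem_support_right⟩ h_not_adj
      (fun h => hwv h.symm) huw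
  have not_compl_adj : ¬ Gᶜ.Adj u v :=
    hGc.trans u w v (fun h => ((G.compl_adj u w).1 h).2 huw)
      (fun h => ((G.compl_adj w v).1 h).2 hwv)
  exact not_compl_adj ((G.compl_adj u v).2 ⟨huv, h_not_adj⟩)

theorem isClique_support_or_isClique_support_compl [Nontrivial V]
    (hG : (G.induce G.support).IsCompleteMultipartite)
    (hGc : (Gᶜ.induce Gᶜ.support).IsCompleteMultipartite) :
    G.IsClique G.support ∨ Gᶜ.IsClique Gᶜ.support := by
  rcases support_eq_univ_or_support_compl_eq_univ G with hs | hs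
  · refine .inr (isClique_support_of_isCompleteMultipartite hGc ?_)
    rw [compl_compl]
    exact isCompleteMultipartite_of_support_eq_univ hG hs
  · exact .inl (isClique_support_of_isCompleteMultipartite hG
      (isCompleteMultipartite_of_support_eq_univ hGc hs))

theorem adj_iff_of_isClique_support (hG : G.IsClique G.support) {u v : V} :
    G.Adj u v ↔ u ≠ v ∧ u ∈ G.support ∧ v ∈ G.support :=
  ⟨fun h => ⟨h.ne, h.mem_support_left, h.mem_support_right⟩, fun h => hG h.2.1 h.2.2 h.1⟩

theorem isClique_compl_insert_support_compl (G : SimpleGraph V) (s : V) :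
    Gᶜ.IsClique (insert s G.supportᶜ) := by
  intro u hu v hv huv
  refine (G.compl_adj u v).2 ⟨huv, fun h => ?_⟩
  rcases hu with rfl | hu
  · rcases hv with rfl | hv
    · exact huv rfl
    · exact hv h.mem_support_right
  · exact hu h.mem_support_left

end CliqueOnSupport

section Counting

variable {V : Type*} [Finite V] {G : SimpleGraph V} {r : ℕ}

theorem ncard_le_of_isClique_of_colorable {s : Set V} (hs : G.IsClique s) (hG : G.Colorable r) :
    s.ncard ≤ r := by
  classical
  have := Fintype.ofFinite V
  rw [Set.ncard_eq_toFinset_card']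
  exact SimpleGraph.IsClique.card_le_of_colorable (by simpa using hs) hG

theorem ncard_support_eq_of_isClique_support (hr : 2 ≤ r) (hV : 2 * r ≤ Nat.card V + 1)
    (hG : G.Colorable r) (hGc : Gᶜ.Colorable r) (hclique : G.IsClique G.support) :
    G.support.ncard = r := by
  have support_le : G.support.ncard ≤ r := ncard_le_of_isClique_of_colorable hclique hG
  have card_add : G.support.ncard + G.supportᶜ.ncard = Nat.card V := Set.ncard_add_ncard_compl _
  have insert_le (s : V) : (insert s G.supportᶜ).ncard ≤ r :=
    ncard_le_of_isClique_of_colorable (isClique_compl_insert_support_compl G s) hGc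
  have support_nonempty : G.support.Nonempty := by
    by_contra h
    rw [Set.not_nonempty_iff_eq_empty] at h
    have : Nonempty V := (Nat.card_pos_iff.1 (by omega)).1
    have card_le := insert_le (Classical.arbitrary V)
    simp only [h, Set.compl_empty, Set.insert_eq_of_mem (Set.mem_univ _), Set.ncard_univ] at card_le
    omega
  obtain ⟨s, hs⟩ := support_nonempty
  have compl_lt := insert_le s
  rw [Set.ncard_insert_of_notMem (Set.notMem_compl_iff.2 hs)] at compl_lt
  omega

end Counting

section TriEdges

variable {V : Type*} {A B C : Set V}

theorem mk_mem_triEdges {u v : V} : s(u, v) ∈ triEdges A B C ↔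
    ((u ∈ A ∧ v ∈ B) ∨ (u ∈ A ∧ v ∈ C) ∨ (u ∈ B ∧ v ∈ C)) ∨
      ((v ∈ A ∧ u ∈ B) ∨ (v ∈ A ∧ u ∈ C) ∨ (v ∈ B ∧ u ∈ C)) := by
  constructor
  · rintro ⟨x, y, hxy, h⟩
    rcases Sym2.eq_iff.1 hxy with ⟨rfl, rfl⟩ | ⟨rfl, rfl⟩
    · exact .inl h
    · exact .inr h
  · rintro (h | h)
    · exact ⟨u, v, rfl, h⟩
    · exact ⟨v, u, Sym2.eq_swap, h⟩

theorem adj_iff_of_edgeSet_eq_triEdges {G : SimpleGraph V} (hG : G.edgeSet = triEdges A B C)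
    {u v : V} : G.Adj u v ↔
      ((u ∈ A ∧ v ∈ B) ∨ (u ∈ A ∧ v ∈ C) ∨ (u ∈ B ∧ v ∈ C)) ∨
        ((v ∈ A ∧ u ∈ B) ∨ (v ∈ A ∧ u ∈ C) ∨ (v ∈ B ∧ u ∈ C)) := by
  rw [← G.mem_edgeSet, hG, mk_mem_triEdges]

theorem isCompleteMultipartite_induce_support_of_edgeSet_eq_triEdges {G : SimpleGraph V}
    (hG : G.edgeSet = triEdges A B C) : (G.induce G.support).IsCompleteMultipartite := by
  have mem_parts {v : V} (hv : v ∈ G.support) : v ∈ A ∨ v ∈ B ∨ v ∈ C := by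
    obtain ⟨w, hvw⟩ := G.mem_support.1 hv
    have := (adj_iff_of_edgeSet_eq_triEdges hG).1 hvw
    tauto
  have same_part {u v : V} (hu : u ∈ G.support) (hv : v ∈ G.support) (huv : ¬ G.Adj u v) :
      (u ∈ A ↔ v ∈ A) ∧ (u ∈ B ↔ v ∈ B) ∧ (u ∈ C ↔ v ∈ C) := by
    have := mem_parts hu
    have := mem_parts hv
    rw [adj_iff_of_edgeSet_eq_triEdges hG] at huv
    tauto
  refine ⟨fun ⟨u, hu⟩ ⟨v, hv⟩ ⟨w, hw⟩ huv hvw huw => huv ?_⟩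
  obtain ⟨hA, hB, hC⟩ := same_part hv hw hvw
  change G.Adj u v
  rwa [adj_iff_of_edgeSet_eq_triEdges hG, hA, hB, hC, ← adj_iff_of_edgeSet_eq_triEdges hG]

theorem colorable_three_of_edgeSet_eq_triEdges {G : SimpleGraph V}
    (hG : G.edgeSet = triEdges A B C) (hAB : Disjoint A B) (hAC : Disjoint A C)
    (hBC : Disjoint B C) : G.Colorable 3 := by
  classical
  refine ⟨.mk (fun v => if v ∈ A then 0 else if v ∈ B then 1 else 2) fun {u v} huv => ?_⟩
  rw [adj_iff_of_edgeSet_eq_triEdges hG] at huv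
  rw [Set.disjoint_left] at hAB hAC hBC
  grind

theorem edgeSet_eq_triEdges_of_support_eq {G : SimpleGraph V} (hG : G.IsClique G.support)
    {a b c : V} (hab : a ≠ b) (hac : a ≠ c) (hbc : b ≠ c) (hs : G.support = {a, b, c}) :
    G.edgeSet = triEdges {a} {b} {c} := by
  refine Set.ext (Sym2.ind fun u v => ?_)
  rw [G.mem_edgeSet, adj_iff_of_isClique_support hG, mk_mem_triEdges, hs]
  grind

theorem compl_edgeSet_eq_triEdges_of_support_compl_eq {G : SimpleGraph V}
    (hG : G.IsClique G.support) {d e : V} (hde : d ≠ e) (hs : G.supportᶜ = {d, e}) :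
    Gᶜ.edgeSet = triEdges G.support {d} {e} := by
  have mem_support_iff (v : V) : v ∈ G.support ↔ v ≠ d ∧ v ≠ e := by
    rw [← Set.notMem_compl_iff, hs]
    simp
  refine Set.ext (Sym2.ind fun u v => ?_)
  rw [Gᶜ.mem_edgeSet, G.compl_adj, adj_iff_of_isClique_support hG, mk_mem_triEdges]
  grind

end TriEdges

section FiveVertices

variable {V : Type*}

theorem exists_equiv_fin_five_of_ncard_eq_three (hV : Nat.card V = 5) {S : Set V}
    (hS : S.ncard = 3) :
    ∃ e : Fin 5 ≃ V, S = {e 0, e 1, e 2} ∧ Sᶜ = {e 3, e 4} := by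
  have : Finite V := Nat.finite_of_card_ne_zero (by omega)
  have hSc : Sᶜ.ncard = 2 := by
    have := Set.ncard_add_ncard_compl S
    omega
  obtain ⟨a, b, c, -, -, -, rfl⟩ := Set.ncard_eq_three.1 hS
  obtain ⟨d, e, -, hde⟩ := Set.ncard_eq_two.1 hSc
  have surj : Function.Surjective ![a, b, c, d, e] := by
    intro v
    rcases Classical.em (v ∈ ({a, b, c} : Set V)) with (rfl | rfl | rfl) | hv
    · exact ⟨0, rfl⟩
    · exact ⟨1, rfl⟩
    · exact ⟨2, rfl⟩
    · rcases (hde ▸ hv : v ∈ ({d, e} : Set V)) with rfl | rfl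
      · exact ⟨3, rfl⟩
      · exact ⟨4, rfl⟩
  exact ⟨.ofBijective _ (surj.bijective_of_nat_card_le (by simp [hV])), rfl, hde⟩

theorem exists_equiv_edgeSet_eq_triEdges_of_isClique_support (hV : Nat.card V = 5)
    {G : SimpleGraph V} (hG : G.Colorable 3) (hGc : Gᶜ.Colorable 3)
    (hclique : G.IsClique G.support) :
    ∃ σ : Fin 5 ≃ V, G.edgeSet = triEdges {σ 0} {σ 1} {σ 2} ∧
      Gᶜ.edgeSet = triEdges {σ 0, σ 1, σ 2} {σ 3} {σ 4} := by
  have : Finite V := Nat.finite_of_card_ne_zero (by omega)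
  have hcard : G.support.ncard = 3 :=
    ncard_support_eq_of_isClique_support (by norm_num) (by omega) hG hGc hclique
  obtain ⟨σ, hs, hsc⟩ := exists_equiv_fin_five_of_ncard_eq_three hV hcard
  have hσ {i j : Fin 5} (hij : i ≠ j) : σ i ≠ σ j := σ.injective.ne hij
  refine ⟨σ, edgeSet_eq_triEdges_of_support_eq hclique (hσ (by decide)) (hσ (by decide))
    (hσ (by decide)) hs, ?_⟩
  rw [← hs]
  exact compl_edgeSet_eq_triEdges_of_support_compl_eq hclique (hσ (by decide)) hsc

end FiveVertices

theorem exists_edgeSet_eq_and_edgeSet_compl_eq {V : Type*} {E F : Set (Sym2 V)}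
    (hunion : (⊤ : SimpleGraph V).edgeSet = E ∪ F) (hdisj : Disjoint E F) :
    ∃ G : SimpleGraph V, G.edgeSet = E ∧ Gᶜ.edgeSet = F := by
  have hE : (SimpleGraph.fromEdgeSet E).edgeSet = E := by
    rw [SimpleGraph.edgeSet_fromEdgeSet, sdiff_eq_left, ← Set.subset_compl_iff_disjoint_right,
      ← SimpleGraph.edgeSet_top, hunion]
    exact Set.subset_union_left
  refine ⟨.fromEdgeSet E, hE, ?_⟩
  rw [← top_sdiff, SimpleGraph.edgeSet_sdiff, hE, hunion, Set.union_sdiff_cancel_left hdisj.le_bot]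

theorem tripartite2Partition_K5_unique_general {V : Type*} (hV : Nat.card V = 5)
    (A₁ B₁ C₁ A₂ B₂ C₂ : Set V)
    (h₁ : Disjoint A₁ B₁) (h₂ : Disjoint A₁ C₁) (h₃ : Disjoint B₁ C₁)
    (h₄ : Disjoint A₂ B₂) (h₅ : Disjoint A₂ C₂) (h₆ : Disjoint B₂ C₂)
    (hunion : (⊤ : SimpleGraph V).edgeSet = triEdges A₁ B₁ C₁ ∪ triEdges A₂ B₂ C₂)
    (hdisj : Disjoint (triEdges A₁ B₁ C₁) (triEdges A₂ B₂ C₂)) :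
    ∃ σ : Fin 5 ≃ V,
      (triEdges A₁ B₁ C₁ = triEdges {σ 0} {σ 1} {σ 2} ∧
          triEdges A₂ B₂ C₂ = triEdges {σ 0, σ 1, σ 2} {σ 3} {σ 4}) ∨
        (triEdges A₂ B₂ C₂ = triEdges {σ 0} {σ 1} {σ 2} ∧
          triEdges A₁ B₁ C₁ = triEdges {σ 0, σ 1, σ 2} {σ 3} {σ 4}) := by
  have : Finite V := Nat.finite_of_card_ne_zero (by omega)
  have : Nontrivial V := Finite.one_lt_card_iff_nontrivial.1 (by omega)
  obtain ⟨G, hG, hGc⟩ := exists_edgeSet_eq_and_edgeSet_compl_eq hunion hdisj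
  have hcol : G.Colorable 3 := colorable_three_of_edgeSet_eq_triEdges hG h₁ h₂ h₃
  have hcolc : Gᶜ.Colorable 3 := colorable_three_of_edgeSet_eq_triEdges hGc h₄ h₅ h₆
  rw [← hG, ← hGc]
  rcases isClique_support_or_isClique_support_compl
    (isCompleteMultipartite_induce_support_of_edgeSet_eq_triEdges hG)
    (isCompleteMultipartite_induce_support_of_edgeSet_eq_triEdges hGc) with hclique | hclique
  · obtain ⟨σ, hσ⟩ :=
      exists_equiv_edgeSet_eq_triEdges_of_isClique_support hV hcol hcolc hclique
    exact ⟨σ, .inl hσ⟩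
  · obtain ⟨σ, hσ⟩ :=
      exists_equiv_edgeSet_eq_triEdges_of_isClique_support hV hcolc
        (by rwa [compl_compl]) hclique
    rw [compl_compl] at hσ
    exact ⟨σ, .inr hσ⟩

/-- Up to an automorphism of `K_5` (a relabeling of the five vertices, and possibly a
swap of the two parts), the tripartite 2-partition of `K_5` is unique: one part is the
triangle on `{v₁, v₂, v₃}` and the other is the complete tripartite graph with parts
`{v₁, v₂, v₃}`, `{v₄}`, `{v₅}`. -/
theorem tripartite2Partition_K5_unique
    (A₁ B₁ C₁ A₂ B₂ C₂ : Set (Fin 5))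
    (h₁ : Disjoint A₁ B₁) (h₂ : Disjoint A₁ C₁) (h₃ : Disjoint B₁ C₁)
    (h₄ : Disjoint A₂ B₂) (h₅ : Disjoint A₂ C₂) (h₆ : Disjoint B₂ C₂)
    (hunion : (⊤ : SimpleGraph (Fin 5)).edgeSet
      = triEdges A₁ B₁ C₁ ∪ triEdges A₂ B₂ C₂)
    (hdisj : Disjoint (triEdges A₁ B₁ C₁) (triEdges A₂ B₂ C₂)) :
    ∃ σ : Equiv.Perm (Fin 5),
      (triEdges A₁ B₁ C₁ = triEdges {σ 0} {σ 1} {σ 2} ∧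
          triEdges A₂ B₂ C₂ = triEdges {σ 0, σ 1, σ 2} {σ 3} {σ 4}) ∨
        (triEdges A₂ B₂ C₂ = triEdges {σ 0} {σ 1} {σ 2} ∧
          triEdges A₁ B₁ C₁ = triEdges {σ 0, σ 1, σ 2} {σ 3} {σ 4}) :=
  tripartite2Partition_K5_unique_general (Nat.card_fin 5) A₁ B₁ C₁ A₂ B₂ C₂
    h₁ h₂ h₃ h₄ h₅ h₆ hunion hdisj
end

section
/- Let F ∈ Z_2[x_1, …, x_n] be a multilinear polynomial such that for every pair of distinct indices {i, j}, both F^{00}_{ij} + F^{11}_{ij} and F^{01}_{ij} + F^{10}_{ij} have total degree at most 1. Then the total degree of F is at most 3; moreover, if the total degree of F equals 3, then F is a complete cubic polynomial. -/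
/-- The multilinear polynomial `F^{ab}_{ij}` obtained from `F` by substituting
`x_i := a` and `x_j := b`. -/
noncomputable def pinPoly {n : ℕ} (i j : Fin n) (a b : ZMod 2)
    (F : MvPolynomial (Fin n) (ZMod 2)) : MvPolynomial (Fin n) (ZMod 2) :=
  MvPolynomial.bind₁
    (fun k => if k = i then MvPolynomial.C a else
      if k = j then MvPolynomial.C b else MvPolynomial.X k) F

/-!
For a multilinear `F` and a monomial `m` free of `x_i` and `x_j`, the coefficient of `m` in
`(F^{00} + F^{11}) - (F^{01} + F^{10})` is the coefficient of `m x_i x_j` in `F`. Hence, if both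
sums have degree at most `d`, then `F` has degree at most `d + 2`. In characteristic two, the
coefficient of `m` in `F^{01} + F^{10}` is the sum of the coefficients of `m x_i` and `m x_j` in
`F`. So these two agree once `m` has degree `d + 1`: the coefficients of the monomials of degree
`d + 2` are invariant under exchanging one variable for another, and any such monomial can be
turned into any other by such exchanges.
-/

open MvPolynomial Finset

lemma eq_of_card_eq_of_insert_eq_insert {α β : Type*} [DecidableEq α] {f : Finset α → β} {k : ℕ}
    (hf : ∀ (U : Finset α) (i j : α), #U = k → i ≠ j → i ∉ U → j ∉ U →
      f (insert i U) = f (insert j U))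
    {S T : Finset α} (hS : #S = k + 1) (hT : #T = k + 1) : f S = f T := by
  induction hr : #(S \ T) generalizing S with
  | zero =>
    have hST : S ⊆ T := sdiff_eq_empty_iff_subset.mp (card_eq_zero.mp hr)
    rw [eq_of_subset_of_card_le hST (by lia)]
  | succ r ih =>
    obtain ⟨i, hi⟩ : (S \ T).Nonempty := card_pos.mp (by lia)
    obtain ⟨j, hj⟩ : (T \ S).Nonempty := card_pos.mp (by
      rw [← card_sdiff_comm (hS.trans hT.symm)]; lia)
    obtain ⟨hiS, hiT⟩ := mem_sdiff.mp hi
    obtain ⟨hjT, hjS⟩ := mem_sdiff.mp hj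
    have hjU : j ∉ S.erase i := fun h => hjS (mem_of_mem_erase h)
    have hU : #(S.erase i) = k := by rw [card_erase_of_mem hiS, hS, Nat.add_sub_cancel]
    have hsdiff : insert j (S.erase i) \ T = (S \ T).erase i := by
      rw [insert_sdiff_of_mem _ hjT, erase_sdiff_comm]
    calc f S = f (insert i (S.erase i)) := by rw [insert_erase hiS]
      _ = f (insert j (S.erase i)) :=
        hf _ i j hU (fun h => hiT (h ▸ hjT)) (notMem_erase i S) hjU
      _ = f T := ih (by rw [card_insert_of_notMem hjU, hU])
        (by rw [hsdiff, card_erase_of_mem hi, hr, Nat.add_sub_cancel])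

section SquarefreeExponent

variable {σ R : Type*}

/-- The exponent vector of the squarefree monomial `∏ i ∈ S, x_i`. -/
noncomputable def squarefreeExponent (S : Finset σ) : σ →₀ ℕ :=
  ∑ i ∈ S, Finsupp.single i 1

lemma squarefreeExponent_insert [DecidableEq σ] {S : Finset σ} {i : σ} (hi : i ∉ S) :
    squarefreeExponent (insert i S) = squarefreeExponent S + Finsupp.single i 1 := by
  rw [squarefreeExponent, sum_insert hi, add_comm, squarefreeExponent]

lemma squarefreeExponent_triple [DecidableEq σ] {i j k : σ} (hij : i ≠ j) (hik : i ≠ k)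
    (hjk : j ≠ k) : squarefreeExponent {i, j, k} =
      Finsupp.single i 1 + Finsupp.single j 1 + Finsupp.single k 1 := by
  rw [squarefreeExponent, sum_insert (by simp [hij, hik]), sum_pair hjk, add_assoc]

lemma squarefreeExponent_apply_eq_zero {S : Finset σ} {i : σ} (hi : i ∉ S) :
    squarefreeExponent S i = 0 := by
  rw [squarefreeExponent, Finsupp.finsetSum_apply]
  exact sum_eq_zero fun j hj => Finsupp.single_eq_of_ne fun h => hi (h ▸ hj)

lemma degree_squarefreeExponent (S : Finset σ) : (squarefreeExponent S).degree = #S := by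
  simp [squarefreeExponent]

lemma eq_squarefreeExponent_support {m : σ →₀ ℕ} (hm : ∀ i, m i ≤ 1) :
    m = squarefreeExponent m.support := by
  calc m = ∑ i ∈ m.support, Finsupp.single i (m i) := m.sum_single.symm
    _ = squarefreeExponent m.support := sum_congr rfl fun i hi => by
      rw [le_antisymm (hm i) (Nat.one_le_iff_ne_zero.mpr (Finsupp.mem_support_iff.mp hi))]

lemma totalDegree_le_iff_squarefreeExponent [CommSemiring R] {F : MvPolynomial σ R}
    (hF : ∀ i, F.degreeOf i ≤ 1) {d : ℕ} :
    F.totalDegree ≤ d ↔ ∀ S : Finset σ, d < #S → F.coeff (squarefreeExponent S) = 0 := by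
  refine ⟨fun h S hS => coeff_eq_zero_of_totalDegree_lt (h.trans_lt ?_), fun h => ?_⟩
  · rwa [← degree_squarefreeExponent] at hS
  · refine Finset.sup_le fun m hm => ?_
    have hmS := eq_squarefreeExponent_support fun i => (monomial_le_degreeOf i hm).trans (hF i)
    by_contra! hd
    change d < m.degree at hd
    rw [hmS, degree_squarefreeExponent] at hd
    rw [mem_support_iff, hmS] at hm
    exact hm (h _ hd)

end SquarefreeExponent

section Pin

variable {σ R : Type*} [DecidableEq σ]

section CommSemiring

variable [CommSemiring R]

/-- The substitution `x_i := a`. -/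
noncomputable def pinVar (i : σ) (a : R) : MvPolynomial σ R →ₐ[R] MvPolynomial σ R :=
  bind₁ (Function.update X i (C a))

lemma pinVar_monomial (i : σ) (a : R) (s : σ →₀ ℕ) (c : R) :
    pinVar i a (monomial s c) = monomial (s.erase i) (c * a ^ s i) := by
  have herase : pinVar i a (monomial (s.erase i) c) = monomial (s.erase i) c := by
    rw [pinVar, bind₁_monomial, monomial_eq, Finsupp.prod]
    refine congrArg _ (prod_congr rfl fun k hk => ?_)
    rw [Function.update_of_ne (by rintro rfl; simp at hk)]
  calc pinVar i a (monomial s c) = pinVar i a (monomial (s.erase i) c * X i ^ s i) := by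
        rw [← monomial_add_single, Finsupp.erase_add_single]
    _ = monomial (s.erase i) c * C (a ^ s i) := by
        rw [map_mul, herase, map_pow, pinVar, bind₁_X_right, Function.update_self, C_pow]
    _ = monomial (s.erase i) (c * a ^ s i) := by
        rw [mul_comm, C_mul_monomial, mul_comm]

lemma pinVar_eq_sum (i : σ) (a : R) (F : MvPolynomial σ R) :
    pinVar i a F = ∑ s ∈ F.support, monomial (s.erase i) (F.coeff s * a ^ s i) := by
  conv_lhs => rw [← F.support_sum_monomial_coeff, map_sum]
  simp only [pinVar_monomial]

lemma degreeOf_pinVar_le (i j : σ) (a : R) (F : MvPolynomial σ R) :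
    (pinVar i a F).degreeOf j ≤ F.degreeOf j := by
  rw [pinVar_eq_sum]
  refine (degreeOf_sum_le j _ _).trans (Finset.sup_le fun s hs => ?_)
  refine degreeOf_le_iff.mpr fun t ht => ?_
  calc t j = s.erase i j := by rw [mem_singleton.mp (support_monomial_subset ht)]
    _ ≤ s j := by rw [Finsupp.erase_apply]; split_ifs <;> lia
    _ ≤ F.degreeOf j := monomial_le_degreeOf j hs

lemma coeff_pinVar {F : MvPolynomial σ R} {i : σ} {d : ℕ} (hF : F.degreeOf i ≤ d) {m : σ →₀ ℕ}
    (hm : m i = 0) (a : R) :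
    (pinVar i a F).coeff m = ∑ k ∈ range (d + 1), F.coeff (m + Finsupp.single i k) * a ^ k := by
  have hsplit {s : σ →₀ ℕ} (hs : s.erase i = m) : s = m + Finsupp.single i (s i) := by
    subst hs
    rw [Finsupp.erase_add_single]
  have hinj : Set.InjOn (fun s : σ →₀ ℕ => s i) ({s ∈ F.support | s.erase i = m} : Finset _) := by
    intro s hs t ht (hst : s i = t i)
    rw [hsplit (mem_filter.mp hs).2, hsplit (mem_filter.mp ht).2, hst]
  have hmaps : Set.MapsTo (fun s : σ →₀ ℕ => s i)
      ({s ∈ F.support | s.erase i = m} : Finset _) (range (d + 1)) := fun s hs =>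
    mem_coe.mpr <| mem_range_succ_iff.mpr <|
      (monomial_le_degreeOf i (mem_filter.mp hs).1).trans hF
  have herase (k : ℕ) : (m + Finsupp.single i k).erase i = m := by
    rw [Finsupp.erase_add, Finsupp.erase_single, add_zero,
      Finsupp.erase_of_notMem_support (Finsupp.notMem_support_iff.mpr hm)]
  rw [pinVar_eq_sum, coeff_sum]
  simp only [coeff_monomial]
  rw [← sum_filter]
  refine sum_of_injOn (fun s => s i) hinj hmaps (fun k _ hk => ?_) (fun s hs => ?_)
  · have hk' : m + Finsupp.single i k ∉ F.support := fun h =>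
      hk ⟨_, mem_filter.mpr ⟨h, herase k⟩, by simp [hm]⟩
    rw [notMem_support_iff.mp hk', zero_mul]
  · rw [← hsplit (mem_filter.mp hs).2]

/-- The polynomial `F^{ab}_{ij}` over an arbitrary coefficient ring and set of variables;
it takes `x_i := a` first, so that `a` wins when `i = j`. -/
noncomputable def pinPair (i j : σ) (a b : R) : MvPolynomial σ R →ₐ[R] MvPolynomial σ R :=
  (pinVar j b).comp (pinVar i a)

lemma coeff_pinPair {F : MvPolynomial σ R} {i j : σ} (hij : i ≠ j) (hFi : F.degreeOf i ≤ 1)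
    (hFj : F.degreeOf j ≤ 1) {m : σ →₀ ℕ} (hmi : m i = 0) (hmj : m j = 0) (a b : R) :
    (pinPair i j a b F).coeff m =
      F.coeff m + a * F.coeff (m + Finsupp.single i 1) + b * F.coeff (m + Finsupp.single j 1) +
        a * b * F.coeff (m + Finsupp.single i 1 + Finsupp.single j 1) := by
  have hmji : (m + Finsupp.single j 1 : σ →₀ ℕ) i = 0 := by
    rw [Finsupp.add_apply, hmi, Finsupp.single_eq_of_ne hij, add_zero]
  rw [pinPair, AlgHom.comp_apply, coeff_pinVar ((degreeOf_pinVar_le i j a F).trans hFj) hmj]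
  simp only [sum_range_succ, sum_range_zero, Finsupp.single_zero, add_zero,
    coeff_pinVar hFi hmi, coeff_pinVar hFi hmji, add_right_comm m]
  ring

end CommSemiring

lemma pinPoly_eq_pinPair {n : ℕ} (i j : Fin n) (a b : ZMod 2)
    (F : MvPolynomial (Fin n) (ZMod 2)) : pinPoly i j a b F = pinPair i j a b F := by
  rw [pinPoly, pinPair, pinVar, pinVar, bind₁_comp_bind₁]
  congr 2 with k : 1
  rcases eq_or_ne k i with rfl | hki
  · simp
  · rcases eq_or_ne k j with rfl | hkj <;> simp [*]

variable [CommRing R] {F : MvPolynomial σ R} {i j : σ} {d : ℕ} {m : σ →₀ ℕ}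

lemma coeff_add_single_add_single_eq_zero (hij : i ≠ j) (hFi : F.degreeOf i ≤ 1)
    (hFj : F.degreeOf j ≤ 1) (heq : (pinPair i j 0 0 F + pinPair i j 1 1 F).totalDegree ≤ d)
    (hne : (pinPair i j 0 1 F + pinPair i j 1 0 F).totalDegree ≤ d)
    (hmi : m i = 0) (hmj : m j = 0) (hm : d < m.degree) :
    F.coeff (m + Finsupp.single i 1 + Finsupp.single j 1) = 0 := by
  have h₁ := coeff_eq_zero_of_totalDegree_lt (heq.trans_lt hm)
  have h₂ := coeff_eq_zero_of_totalDegree_lt (hne.trans_lt hm)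
  simp only [coeff_add, coeff_pinPair hij hFi hFj hmi hmj] at h₁ h₂
  linear_combination h₁ - h₂

lemma coeff_add_single_eq_coeff_add_single [CharP R 2] (hij : i ≠ j) (hFi : F.degreeOf i ≤ 1)
    (hFj : F.degreeOf j ≤ 1) (hne : (pinPair i j 0 1 F + pinPair i j 1 0 F).totalDegree ≤ d)
    (hmi : m i = 0) (hmj : m j = 0) (hm : d < m.degree) :
    F.coeff (m + Finsupp.single i 1) = F.coeff (m + Finsupp.single j 1) := by
  have h := coeff_eq_zero_of_totalDegree_lt (hne.trans_lt hm)
  simp only [coeff_add, coeff_pinPair hij hFi hFj hmi hmj] at h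
  refine CharTwo.add_eq_zero.mp ?_
  linear_combination h - F.coeff m * CharTwo.two_eq_zero (R := R)

theorem totalDegree_le_add_two_of_pinPair (hF : ∀ i, F.degreeOf i ≤ 1)
    (hpin : ∀ i j, i ≠ j →
      (pinPair i j 0 0 F + pinPair i j 1 1 F).totalDegree ≤ d ∧
      (pinPair i j 0 1 F + pinPair i j 1 0 F).totalDegree ≤ d) :
    F.totalDegree ≤ d + 2 := by
  rw [totalDegree_le_iff_squarefreeExponent hF]
  intro S hS
  obtain ⟨i, hi, j, hj, hij⟩ := one_lt_card.mp (show 1 < #S by lia)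
  set U := (S.erase j).erase i
  have hiU : i ∉ U := notMem_erase _ _
  have hjU : j ∉ U := fun h => notMem_erase j S (mem_of_mem_erase h)
  have hiS : i ∈ S.erase j := mem_erase.mpr ⟨hij, hi⟩
  have hjU' : j ∉ insert i U := by rw [insert_erase hiS]; exact notMem_erase j S
  have hSU : S = insert j (insert i U) := by rw [insert_erase hiS, insert_erase hj]
  have hU : d < (squarefreeExponent U).degree := by
    rw [degree_squarefreeExponent, card_erase_of_mem hiS, card_erase_of_mem hj]
    lia
  rw [hSU, squarefreeExponent_insert hjU', squarefreeExponent_insert hiU]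
  exact coeff_add_single_add_single_eq_zero hij (hF i) (hF j) (hpin i j hij).1 (hpin i j hij).2
    (squarefreeExponent_apply_eq_zero hiU) (squarefreeExponent_apply_eq_zero hjU) hU

lemma coeff_squarefreeExponent_eq_of_card_eq [CharP R 2] (hF : ∀ i, F.degreeOf i ≤ 1)
    (hne : ∀ i j, i ≠ j → (pinPair i j 0 1 F + pinPair i j 1 0 F).totalDegree ≤ d)
    {S T : Finset σ} (hS : #S = d + 2) (hT : #T = d + 2) :
    F.coeff (squarefreeExponent S) = F.coeff (squarefreeExponent T) := by
  refine eq_of_card_eq_of_insert_eq_insert (f := fun S => F.coeff (squarefreeExponent S))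
    (fun U i j hU hij hi hj => ?_) hS hT
  simp only [squarefreeExponent_insert hi, squarefreeExponent_insert hj]
  exact coeff_add_single_eq_coeff_add_single hij (hF i) (hF j) (hne i j hij)
    (squarefreeExponent_apply_eq_zero hi) (squarefreeExponent_apply_eq_zero hj)
    (by rw [degree_squarefreeExponent, hU]; exact d.lt_succ_self)

theorem multilinear_linear_pins_totalDegree_le_three_general [CharP R 2]
    (hF : ∀ i, F.degreeOf i ≤ 1)
    (hpin : ∀ i j, i ≠ j →
      (pinPair i j 0 0 F + pinPair i j 1 1 F).totalDegree ≤ d ∧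
      (pinPair i j 0 1 F + pinPair i j 1 0 F).totalDegree ≤ d) :
    F.totalDegree ≤ d + 2 ∧ (F.totalDegree = d + 2 →
      ∃ c ≠ 0, ∀ S : Finset σ, #S = d + 2 → F.coeff (squarefreeExponent S) = c) := by
  have hle : F.totalDegree ≤ d + 2 := totalDegree_le_add_two_of_pinPair hF hpin
  refine ⟨hle, fun hdeg => ?_⟩
  obtain ⟨T, hT, hTF⟩ : ∃ T : Finset σ, d + 1 < #T ∧ F.coeff (squarefreeExponent T) ≠ 0 := by
    by_contra! h
    have := (totalDegree_le_iff_squarefreeExponent hF).mpr h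
    lia
  have hT' : #T ≤ d + 2 := by
    by_contra! h
    exact hTF ((totalDegree_le_iff_squarefreeExponent hF).mp hle T h)
  exact ⟨_, hTF, fun S hS => coeff_squarefreeExponent_eq_of_card_eq hF
    (fun i j hij => (hpin i j hij).2) hS (by lia)⟩

end Pin

/-- Let `F ∈ ℤ₂[x_1, …, x_n]` be multilinear such that for all distinct `i, j`, both
`F^{00}_{ij} + F^{11}_{ij}` and `F^{01}_{ij} + F^{10}_{ij}` have total degree at
most `1`. Then `F` has total degree at most `3`; moreover if the total degree equals
`3` then `F` is a complete cubic polynomial (every monomial `x_i x_j x_k` occurs). -/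
theorem multilinear_linear_pins_totalDegree_le_three (n : ℕ)
    (F : MvPolynomial (Fin n) (ZMod 2))
    (hml : ∀ i : Fin n, F.degreeOf i ≤ 1)
    (hlin : ∀ i j : Fin n, i ≠ j →
      (pinPoly i j 0 0 F + pinPoly i j 1 1 F).totalDegree ≤ 1 ∧
      (pinPoly i j 0 1 F + pinPoly i j 1 0 F).totalDegree ≤ 1) :
    F.totalDegree ≤ 3 ∧
      (F.totalDegree = 3 → ∀ i j k : Fin n, i ≠ j → i ≠ k → j ≠ k →
        F.coeff (Finsupp.single i 1 + Finsupp.single j 1 + Finsupp.single k 1) = 1) := by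
  simp only [pinPoly_eq_pinPair] at hlin
  obtain ⟨hle, hcubic⟩ := multilinear_linear_pins_totalDegree_le_three_general hml hlin
  refine ⟨hle, fun h3 i j k hij hik hjk => ?_⟩
  obtain ⟨c, hc, hcoeff⟩ := hcubic h3
  have hcard : #{i, j, k} = 3 := card_eq_three.mpr ⟨i, j, k, hij, hik, hjk, rfl⟩
  rw [← squarefreeExponent_triple hij hik hjk, hcoeff _ hcard]
  exact Fin.eq_one_of_ne_zero c hc
end

section
/- A complete quadratic multilinear polynomial F ∈ Z_2[x_1, …, x_5] in 5 variables has a twice-linear 2-partition F = L_1·L_2 + L_3·L_4 if and only if, after a permutation of the variables, L_1·L_2 = (x_1 + x_2 + a)(x_2 + x_3 + b) and L_3·L_4 = (x_1 + x_2 + x_3 + x_4 + c)(x_1 + x_2 + x_3 + x_5 + d) for some constants a, b, c, d ∈ Z_2. -/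
/-!
Attach to the `i`-th variable the two columns `p i, q i ∈ ℤ₂²` of its coefficients in
`(L₁, L₂)` and in `(L₃, L₄)`. The coefficient of `x_i x_j` in `L₁ L₂ + L₃ L₄` is
`det (p i, p j) + det (q i, q j)`, so for `i ≠ j` exactly one of the two determinants is `1`. Over
`ℤ₂` a determinant is `1` exactly when its columns are distinct and nonzero. If `p i = 0` and
`q j = 0`, both determinants vanish; hence, after exchanging the products if necessary, no `p i`
is zero. Two of the five `p i` then agree, say with value `u`; the corresponding `q i` form a basis
of `ℤ₂²`, which forces `q k = 0` whenever `p k ≠ u`. So `q` maps `{k | p k = u}` injectively into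
the three nonzero vectors, `p` maps the complement injectively into the two nonzero vectors other
than `u`, and by counting both maps are bijections.
-/

section MixedDifference

variable {ι R : Type*} [DecidableEq ι] [CommRing R]

/-- The second mixed difference of `f` at the origin in the directions of the `i`-th and `j`-th
coordinate vectors. On multilinear polynomials it reads off the coefficient of `x_i x_j`. -/
def mixedDifference (f : (ι → R) → R) (i j : ι) : R :=
  f (Pi.single i 1 + Pi.single j 1) - f (Pi.single i 1) - f (Pi.single j 1) + f 0

theorem mixedDifference_add (f g : (ι → R) → R) (i j : ι) :
    mixedDifference (fun x => f x + g x) i j = mixedDifference f i j + mixedDifference g i j := by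
  simp only [mixedDifference]
  ring

theorem mixedDifference_affine_mul_affine [Fintype ι] (k l : R) (a b : ι → R) (i j : ι) :
    mixedDifference (fun x => (k + a ⬝ᵥ x) * (l + b ⬝ᵥ x)) i j = a i * b j + a j * b i := by
  simp only [mixedDifference, dotProduct_add, dotProduct_single_one, dotProduct_zero]
  ring

open MvPolynomial

theorem eval_indicator_monomial {S : Type*} [CommSemiring S] (A : Finset ι) (m : ι →₀ ℕ) (r : S) :
    eval (fun k => if k ∈ A then 1 else 0) (monomial m r) = if m.support ⊆ A then r else 0 := by
  have pow_eq : ∀ k ∈ m.support, (if k ∈ A then (1 : S) else 0) ^ m k = if k ∈ A then 1 else 0 :=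
    fun k hk => by split_ifs <;> simp [Finsupp.mem_support_iff.1 hk]
  rw [eval_monomial, Finsupp.prod, Finset.prod_congr rfl pow_eq, Finset.prod_ite_zero]
  simp only [Finset.prod_const_one, mul_ite, mul_one, mul_zero]
  exact if_congr Finset.subset_iff.symm rfl rfl

theorem eq_single_add_single_iff_support_eq {m : ι →₀ ℕ} (hm : ∀ k, m k ≤ 1) {i j : ι}
    (hij : i ≠ j) :
    m = Finsupp.single i 1 + Finsupp.single j 1 ↔ m.support = {i, j} := by
  simp only [Finsupp.ext_iff, Finset.ext_iff]
  refine forall_congr' fun k => ?_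
  have := hm k
  simp only [Finsupp.add_apply, Finsupp.single_apply, Finsupp.mem_support_iff, Finset.mem_insert,
    Finset.mem_singleton]
  grind

theorem inclusion_exclusion_subset_pair {M : Type*} [AddCommGroup M] (s : Finset ι) {i j : ι}
    (hij : i ≠ j) (r : M) :
    (if s ⊆ {i, j} then r else 0) - (if s ⊆ {i} then r else 0) - (if s ⊆ {j} then r else 0) +
      (if s ⊆ ∅ then r else 0) = if s = {i, j} then r else 0 := by
  have subset_left : s ⊆ {i} ↔ s ⊆ {i, j} ∧ j ∉ s := by grind
  have subset_right : s ⊆ {j} ↔ s ⊆ {i, j} ∧ i ∉ s := by grind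
  have subset_empty : s ⊆ ∅ ↔ s ⊆ {i, j} ∧ i ∉ s ∧ j ∉ s := by grind
  have eq_pair : s = {i, j} ↔ s ⊆ {i, j} ∧ i ∈ s ∧ j ∈ s := by grind
  simp only [subset_left, subset_right, subset_empty, eq_pair]
  by_cases hs : s ⊆ {i, j} <;> by_cases hi : i ∈ s <;> by_cases hj : j ∈ s <;> simp [hs, hi, hj]

theorem mixedDifference_monomial {m : ι →₀ ℕ} (hm : ∀ k, m k ≤ 1) (r : R) {i j : ι} (hij : i ≠ j) :
    mixedDifference (fun x => eval x (monomial m r)) i j =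
      if m = Finsupp.single i 1 + Finsupp.single j 1 then r else 0 := by
  have single_eq (a : ι) : (Pi.single a 1 : ι → R) =
      fun k => if k ∈ ({a} : Finset ι) then 1 else 0 := by
    ext k
    simp [Pi.single_apply]
  have pair_eq : (Pi.single i 1 + Pi.single j 1 : ι → R) =
      fun k => if k ∈ ({i, j} : Finset ι) then 1 else 0 := by
    ext k
    simp only [Pi.add_apply, Pi.single_apply, Finset.mem_insert, Finset.mem_singleton]
    grind
  have zero_eq : (0 : ι → R) = fun k => if k ∈ (∅ : Finset ι) then 1 else 0 := by
    ext k
    simp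
  simp only [mixedDifference]
  rw [pair_eq, single_eq i, single_eq j, zero_eq]
  simp only [eval_indicator_monomial, eq_single_add_single_iff_support_eq hm hij]
  exact inclusion_exclusion_subset_pair _ hij r

theorem mixedDifference_eval {F : MvPolynomial ι R} (hF : ∀ k, F.degreeOf k ≤ 1) {i j : ι}
    (hij : i ≠ j) :
    mixedDifference (fun x => eval x F) i j =
      F.coeff (Finsupp.single i 1 + Finsupp.single j 1) := by
  calc mixedDifference (fun x => eval x F) i j
      = ∑ m ∈ F.support, mixedDifference (fun x => eval x (monomial m (F.coeff m))) i j := by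
        conv_lhs => rw [F.as_sum]
        simp only [mixedDifference, map_sum, Finset.sum_add_distrib, Finset.sum_sub_distrib]
    _ = ∑ m ∈ F.support,
          if m = Finsupp.single i 1 + Finsupp.single j 1 then F.coeff m else 0 :=
        Finset.sum_congr rfl fun m hm =>
          mixedDifference_monomial (fun k => degreeOf_le_iff.1 (hF k) m hm) _ hij
    _ = F.coeff (Finsupp.single i 1 + Finsupp.single j 1) := by
        simp +contextual

end MixedDifference

section AffinePolynomial

open MvPolynomial

variable {ι R : Type*} [Fintype ι] [CommSemiring R]

theorem totalDegree_le_one_iff_exists_eq_C_add_sum {L : MvPolynomial ι R} :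
    L.totalDegree ≤ 1 ↔ ∃ (k : R) (a : ι → R), L = C k + ∑ i, a i • X i := by
  constructor
  · intro hL
    have linear_part : homogeneousComponent 1 L ∈ homogeneousSubmodule ι R 1 :=
      homogeneousComponent_mem 1 L
    rw [homogeneousSubmodule_one_eq_span_X, Submodule.mem_span_range_iff_exists_fun] at linear_part
    obtain ⟨a, ha⟩ := linear_part
    refine ⟨coeff 0 L, a, ?_⟩
    calc L = ∑ n ∈ Finset.range (L.totalDegree + 1), homogeneousComponent n L :=
          (sum_homogeneousComponent L).symm
      _ = ∑ n ∈ Finset.range 2, homogeneousComponent n L :=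
          Finset.sum_subset (Finset.range_mono (by omega)) fun n _ hn =>
            homogeneousComponent_eq_zero n L (Nat.lt_of_succ_le (by simpa using hn))
      _ = C (coeff 0 L) + ∑ i, a i • X i := by
          rw [Finset.sum_range_succ, Finset.sum_range_one, homogeneousComponent_zero, ha]
  · rintro ⟨k, a, rfl⟩
    have linear_part : (∑ i, a i • X i : MvPolynomial ι R).IsHomogeneous 1 := by
      simp only [smul_eq_C_mul]
      exact IsHomogeneous.sum _ _ _ fun i _ => isHomogeneous_C_mul_X (a i) i
    refine (totalDegree_add _ _).trans (max_le ?_ linear_part.totalDegree_le)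
    simp only [totalDegree_C, zero_le]

theorem eval_C_add_sum_smul_X (k : R) (a x : ι → R) :
    eval x (C k + ∑ i, a i • X i) = k + a ⬝ᵥ x := by
  simp [dotProduct, smul_eval]

end AffinePolynomial

section PlaneDet

/-- The determinant of two vectors of `ℤ₂²`; signs are immaterial in characteristic two. -/
def planeDet (u v : ZMod 2 × ZMod 2) : ZMod 2 :=
  u.1 * v.2 + v.1 * u.2

theorem planeDet_eq_one_iff :
    ∀ {u v : ZMod 2 × ZMod 2}, planeDet u v = 1 ↔ u ≠ 0 ∧ v ≠ 0 ∧ u ≠ v := by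
  decide

theorem planeDet_self : ∀ u : ZMod 2 × ZMod 2, planeDet u u = 0 := by
  decide

theorem planeDet_zero_left (v : ZMod 2 × ZMod 2) : planeDet 0 v = 0 := by
  simp [planeDet]

theorem planeDet_zero_right (u : ZMod 2 × ZMod 2) : planeDet u 0 = 0 := by
  simp [planeDet]

theorem eq_zero_of_planeDet_eq_zero :
    ∀ {u v w : ZMod 2 × ZMod 2}, planeDet u v = 1 → planeDet u w = 0 → planeDet v w = 0 →
      w = 0 := by
  decide

/-- Up to constants, a product of affine forms over `ℤ₂` depends only on the plane spanned by the
linear parts, because `L M = L (L + M + 1) = M (L + M + 1)`; here that plane is spanned by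
`y + z` and `y + t`. -/
theorem exists_affine_mul_eq_of_planeDet_eq_one :
    ∀ {u v w : ZMod 2 × ZMod 2}, planeDet u v = 1 → planeDet u w = 1 → planeDet v w = 1 →
      ∀ k l : ZMod 2, ∃ r s : ZMod 2, ∀ y z t : ZMod 2,
        (k + (u.1 * y + v.1 * z + w.1 * t)) * (l + (u.2 * y + v.2 * z + w.2 * t)) =
          (y + z + r) * (y + t + s) := by
  decide

end PlaneDet

section ComplementaryColumns

variable {ι : Type*} {p q : ι → ZMod 2 × ZMod 2}

theorem exists_ne_map_eq_of_forall_ne_zero [Fintype ι] (hι : 3 < Fintype.card ι)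
    (hp : ∀ i, p i ≠ 0) : ∃ i j, i ≠ j ∧ p i = p j := by
  obtain ⟨i, -, j, -, hij, hpij⟩ := Finset.exists_ne_map_eq_of_card_lt_of_maps_to
    (s := Finset.univ) (t := Finset.univ.erase (0 : ZMod 2 × ZMod 2)) (f := p) (by simpa)
    (by simp [hp])
  exact ⟨i, j, hij, hpij⟩

/-- Two families of vectors of `ℤ₂²` such that, for every pair of distinct indices, exactly one
of the two determinants is `1`. For the coefficient columns of two products of affine forms this
says that every `x_i x_j` occurs in their sum. -/
def HasComplementaryDets (p q : ι → ZMod 2 × ZMod 2) : Prop :=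
  ∀ ⦃i j⦄, i ≠ j → planeDet (p i) (p j) + planeDet (q i) (q j) = 1

namespace HasComplementaryDets

theorem symm (h : HasComplementaryDets p q) : HasComplementaryDets q p :=
  fun _ _ hij => (add_comm _ _).trans (h hij)

theorem forall_ne_zero_or [Nontrivial ι] (h : HasComplementaryDets p q) :
    (∀ i, p i ≠ 0) ∨ ∀ i, q i ≠ 0 := by
  by_contra! ⟨⟨i, hi⟩, ⟨j, hj⟩⟩
  obtain rfl | hij := eq_or_ne i j
  · obtain ⟨k, hk⟩ := exists_ne i
    simpa [hi, hj, planeDet_zero_right] using h hk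
  · simpa [hi, hj, planeDet_zero_left, planeDet_zero_right] using h hij

theorem planeDet_right_eq_one (h : HasComplementaryDets p q) {i j : ι} (hij : i ≠ j)
    (hp : p i = p j) : planeDet (q i) (q j) = 1 := by
  have := h hij
  rwa [hp, planeDet_self, zero_add] at this

theorem planeDet_right_eq_zero (h : HasComplementaryDets p q) (hp : ∀ i, p i ≠ 0) {i j : ι}
    (hij : p i ≠ p j) : planeDet (q i) (q j) = 0 := by
  simpa [planeDet_eq_one_iff.2 ⟨hp i, hp j, hij⟩] using h (ne_of_apply_ne p hij)

theorem exists_const_on_and_eq_zero_off [Fintype ι] [DecidableEq ι] (h : HasComplementaryDets p q)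
    (hι : 3 < Fintype.card ι) (hp : ∀ i, p i ≠ 0) :
    ∃ (u : ZMod 2 × ZMod 2) (s : Finset ι), s.card ≤ 3 ∧ sᶜ.card ≤ 2 ∧
      (∀ i ∈ s, p i = u) ∧ ∀ i ∉ s, q i = 0 := by
  obtain ⟨i, j, hij, hpij⟩ := exists_ne_map_eq_of_forall_ne_zero hι hp
  have hq_zero : ∀ k, p k ≠ p i → q k = 0 := fun k hk =>
    eq_zero_of_planeDet_eq_zero (h.planeDet_right_eq_one hij hpij)
      (h.planeDet_right_eq_zero hp hk.symm) (h.planeDet_right_eq_zero hp (hpij ▸ hk.symm))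
  have hq_inj : Set.InjOn q {k | p k = p i} := fun a ha b hb hab => by
    by_contra hne
    exact (planeDet_eq_one_iff.1
      (h.planeDet_right_eq_one hne (ha.trans hb.symm))).2.2 hab
  have hp_inj : Set.InjOn p {k | p k ≠ p i} := fun a ha b _ hab => by
    by_contra hne
    exact (planeDet_eq_one_iff.1 (h.planeDet_right_eq_one hne hab)).1 (hq_zero a ha)
  refine ⟨p i, ({k | p k = p i} : Finset ι), ?_, ?_, by simp, by simpa using hq_zero⟩
  · have hq_maps : ∀ k, p k = p i → q k ≠ 0 := fun k hk => by
      obtain rfl | hki := eq_or_ne k i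
      · exact (planeDet_eq_one_iff.1 (h.planeDet_right_eq_one hij hpij)).1
      · exact (planeDet_eq_one_iff.1 (h.planeDet_right_eq_one hki hk)).1
    refine Finset.card_le_card_of_injOn (t := Finset.univ.erase 0) q ?_ ?_
    · simpa [Set.MapsTo] using hq_maps
    · simpa using hq_inj
  · have card_erase : ((Finset.univ.erase 0).erase (p i)).card = 2 := by
      rw [Finset.card_erase_of_mem (by simp [hp])]
      rfl
    rw [Finset.compl_filter]
    refine (Finset.card_le_card_of_injOn p ?_ ?_).trans_eq card_erase
    · simp +contextual [Set.MapsTo, hp]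
    · simpa using hp_inj

end HasComplementaryDets

end ComplementaryColumns

section NormalForm

/-- The two products `f`, `g` are `(x₁ + x₂ + a)(x₂ + x₃ + b)` and
`(x₁ + x₂ + x₃ + x₄ + c)(x₁ + x₂ + x₃ + x₅ + d)` after renumbering the variables by `σ`. -/
def IsCanonicalPair (σ : Equiv.Perm (Fin 5)) (a b c d : ZMod 2)
    (f g : (Fin 5 → ZMod 2) → ZMod 2) : Prop :=
  (∀ x, f x = (x (σ 0) + x (σ 1) + a) * (x (σ 1) + x (σ 2) + b)) ∧
    ∀ x, g x = (x (σ 0) + x (σ 1) + x (σ 2) + x (σ 3) + c) *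
      (x (σ 0) + x (σ 1) + x (σ 2) + x (σ 4) + d)

theorem dotProduct_eq_sum_perm {R : Type*} [NonUnitalNonAssocSemiring R] (σ : Equiv.Perm (Fin 5))
    (a x : Fin 5 → R) :
    a ⬝ᵥ x = a (σ 0) * x (σ 0) + a (σ 1) * x (σ 1) + a (σ 2) * x (σ 2) + a (σ 3) * x (σ 3) +
      a (σ 4) * x (σ 4) := by
  rw [dotProduct, ← Equiv.sum_comp σ, Fin.sum_univ_five]

variable {p q : Fin 5 → ZMod 2 × ZMod 2}

theorem HasComplementaryDets.exists_perm (h : HasComplementaryDets p q) (hp : ∀ i, p i ≠ 0) :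
    ∃ σ : Equiv.Perm (Fin 5),
      p (σ 1) = p (σ 0) ∧ p (σ 2) = p (σ 0) ∧ q (σ 3) = 0 ∧ q (σ 4) = 0 := by
  obtain ⟨u, s, hs, hsc, hpu, hq0⟩ := h.exists_const_on_and_eq_zero_off (by simp) hp
  have card_add : s.card + sᶜ.card = 5 := by simp
  have hs₃ : s.card = 3 := by omega
  have hsc₂ : sᶜ.card = 2 := by omega
  let e := finSumEquivOfFinset hs₃ hsc₂
  have hp_e (i : Fin 3) : p (e (.inl i)) = u := hpu _ (s.orderEmbOfFin_mem hs₃ i)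
  have hq_e (i : Fin 2) : q (e (.inr i)) = 0 :=
    hq0 _ (Finset.mem_compl.1 (sᶜ.orderEmbOfFin_mem hsc₂ i))
  exact ⟨finSumFinEquiv.symm.trans e, (hp_e 1).trans (hp_e 0).symm, (hp_e 2).trans (hp_e 0).symm,
    hq_e 0, hq_e 1⟩

theorem HasComplementaryDets.exists_isCanonicalPair (h : HasComplementaryDets p q)
    (hp : ∀ i, p i ≠ 0) (k l m n : ZMod 2) :
    ∃ (σ : Equiv.Perm (Fin 5)) (a b c d : ZMod 2), IsCanonicalPair σ a b c d
      (fun x => (m + (fun i => (q i).1) ⬝ᵥ x) * (n + (fun i => (q i).2) ⬝ᵥ x))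
      (fun x => (k + (fun i => (p i).1) ⬝ᵥ x) * (l + (fun i => (p i).2) ⬝ᵥ x)) := by
  obtain ⟨σ, hp1, hp2, hq3, hq4⟩ := h.exists_perm hp
  have hσ {i j : Fin 5} (hij : i ≠ j) := σ.injective.ne hij
  have det_q {i j : Fin 5} (hij : i ≠ j) (hpij : p (σ i) = p (σ j)) :
      planeDet (q (σ i)) (q (σ j)) = 1 := h.planeDet_right_eq_one (hσ hij) hpij
  have det_p {i j : Fin 5} (hij : i ≠ j) (hq : q (σ j) = 0) :
      planeDet (p (σ i)) (p (σ j)) = 1 := by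
    simpa [hq, planeDet_zero_right] using h (hσ hij)
  obtain ⟨a, b, hab⟩ := exists_affine_mul_eq_of_planeDet_eq_one
    (det_q (i := 1) (j := 0) (by decide) hp1)
    (det_q (i := 1) (j := 2) (by decide) (hp1.trans hp2.symm))
    (det_q (i := 0) (j := 2) (by decide) hp2.symm) m n
  obtain ⟨c, d, hcd⟩ := exists_affine_mul_eq_of_planeDet_eq_one
    (det_p (i := 0) (j := 3) (by decide) hq3) (det_p (i := 0) (j := 4) (by decide) hq4)
    (det_p (i := 3) (j := 4) (by decide) hq4) k l
  refine ⟨σ, a, b, c, d, fun x => ?_, fun x => ?_⟩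
  · have := hab (x (σ 1)) (x (σ 0)) (x (σ 2))
    simp only [dotProduct_eq_sum_perm σ, hq3, hq4, Prod.fst_zero, Prod.snd_zero]
    linear_combination this
  · have := hcd (x (σ 0) + x (σ 1) + x (σ 2)) (x (σ 3)) (x (σ 4))
    simp only [dotProduct_eq_sum_perm σ, hp1, hp2]
    linear_combination this

end NormalForm

section Partition

open MvPolynomial

theorem exists_isCanonicalPair_of_partition {F : (Fin 5 → ZMod 2) → ZMod 2}
    (hF : ∀ i j, i ≠ j → mixedDifference F i j = 1) {L₁ L₂ L₃ L₄ : MvPolynomial (Fin 5) (ZMod 2)}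
    (h₁ : L₁.totalDegree ≤ 1) (h₂ : L₂.totalDegree ≤ 1) (h₃ : L₃.totalDegree ≤ 1)
    (h₄ : L₄.totalDegree ≤ 1)
    (hL : ∀ x, F x = eval x L₁ * eval x L₂ + eval x L₃ * eval x L₄) :
    ∃ (σ : Equiv.Perm (Fin 5)) (a b c d : ZMod 2),
      IsCanonicalPair σ a b c d (fun x => eval x L₁ * eval x L₂) (fun x => eval x L₃ * eval x L₄) ∨
      IsCanonicalPair σ a b c d (fun x => eval x L₃ * eval x L₄)
        (fun x => eval x L₁ * eval x L₂) := by
  obtain ⟨k₁, a₁, rfl⟩ := totalDegree_le_one_iff_exists_eq_C_add_sum.1 h₁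
  obtain ⟨k₂, a₂, rfl⟩ := totalDegree_le_one_iff_exists_eq_C_add_sum.1 h₂
  obtain ⟨k₃, a₃, rfl⟩ := totalDegree_le_one_iff_exists_eq_C_add_sum.1 h₃
  obtain ⟨k₄, a₄, rfl⟩ := totalDegree_le_one_iff_exists_eq_C_add_sum.1 h₄
  simp only [eval_C_add_sum_smul_X] at hL ⊢
  have dets : HasComplementaryDets (fun i => (a₁ i, a₂ i)) (fun i => (a₃ i, a₄ i)) :=
    fun i j hij => by
      have := hF i j hij
      rwa [funext hL, mixedDifference_add, mixedDifference_affine_mul_affine,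
        mixedDifference_affine_mul_affine] at this
  obtain hp | hq := dets.forall_ne_zero_or
  · obtain ⟨σ, a, b, c, d, h⟩ := dets.exists_isCanonicalPair hp k₁ k₂ k₃ k₄
    exact ⟨σ, a, b, c, d, .inr h⟩
  · obtain ⟨σ, a, b, c, d, h⟩ := dets.symm.exists_isCanonicalPair hq k₃ k₄ k₁ k₂
    exact ⟨σ, a, b, c, d, .inl h⟩

theorem exists_partition_of_eq_canonical {F : (Fin 5 → ZMod 2) → ZMod 2}
    {σ : Equiv.Perm (Fin 5)} {a b c d : ZMod 2}
    (hF : ∀ x, F x = (x (σ 0) + x (σ 1) + a) * (x (σ 1) + x (σ 2) + b) +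
      (x (σ 0) + x (σ 1) + x (σ 2) + x (σ 3) + c) * (x (σ 0) + x (σ 1) + x (σ 2) + x (σ 4) + d)) :
    ∃ L₁ L₂ L₃ L₄ : MvPolynomial (Fin 5) (ZMod 2),
      L₁.totalDegree ≤ 1 ∧ L₂.totalDegree ≤ 1 ∧ L₃.totalDegree ≤ 1 ∧ L₄.totalDegree ≤ 1 ∧
        ∀ x, F x = eval x L₁ * eval x L₂ + eval x L₃ * eval x L₄ := by
  have degree_le (k : ZMod 2) (v : Fin 5 → ZMod 2) : (C k + ∑ i, v i • X i).totalDegree ≤ 1 :=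
    totalDegree_le_one_iff_exists_eq_C_add_sum.2 ⟨k, v, rfl⟩
  let e (i : Fin 5) : Fin 5 → ZMod 2 := Pi.single (σ i) 1
  refine ⟨_, _, _, _, degree_le a (e 0 + e 1), degree_le b (e 1 + e 2),
    degree_le c (e 0 + e 1 + e 2 + e 3), degree_le d (e 0 + e 1 + e 2 + e 4), fun x => ?_⟩
  simp only [hF, e, eval_C_add_sum_smul_X, add_dotProduct, single_one_dotProduct]
  ring

end Partition

theorem complete_quadratic_five_twice_linear_partition_general
    (F : (Fin 5 → ZMod 2) → ZMod 2)
    (hF : ∀ i j : Fin 5, i ≠ j → mixedDifference F i j = 1) :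
    ((∃ L₁ L₂ L₃ L₄ : MvPolynomial (Fin 5) (ZMod 2),
        L₁.totalDegree ≤ 1 ∧ L₂.totalDegree ≤ 1 ∧ L₃.totalDegree ≤ 1 ∧
        L₄.totalDegree ≤ 1 ∧
        ∀ x : Fin 5 → ZMod 2,
          F x = MvPolynomial.eval x L₁ * MvPolynomial.eval x L₂ +
            MvPolynomial.eval x L₃ * MvPolynomial.eval x L₄) ↔
      (∃ (σ : Equiv.Perm (Fin 5)) (a b c d : ZMod 2),
        ∀ x : Fin 5 → ZMod 2,
          F x = (x (σ 0) + x (σ 1) + a) * (x (σ 1) + x (σ 2) + b) +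
            (x (σ 0) + x (σ 1) + x (σ 2) + x (σ 3) + c) *
              (x (σ 0) + x (σ 1) + x (σ 2) + x (σ 4) + d))) ∧
    (∀ L₁ L₂ L₃ L₄ : MvPolynomial (Fin 5) (ZMod 2),
      L₁.totalDegree ≤ 1 → L₂.totalDegree ≤ 1 → L₃.totalDegree ≤ 1 →
      L₄.totalDegree ≤ 1 →
      (∀ x : Fin 5 → ZMod 2,
        F x = MvPolynomial.eval x L₁ * MvPolynomial.eval x L₂ +
          MvPolynomial.eval x L₃ * MvPolynomial.eval x L₄) →
      ∃ (σ : Equiv.Perm (Fin 5)) (a b c d : ZMod 2),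
        IsCanonicalPair σ a b c d
          (fun x => MvPolynomial.eval x L₁ * MvPolynomial.eval x L₂)
          (fun x => MvPolynomial.eval x L₃ * MvPolynomial.eval x L₄) ∨
        IsCanonicalPair σ a b c d
          (fun x => MvPolynomial.eval x L₃ * MvPolynomial.eval x L₄)
          (fun x => MvPolynomial.eval x L₁ * MvPolynomial.eval x L₂)) := by
  refine ⟨⟨?_, ?_⟩, fun _ _ _ _ => exists_isCanonicalPair_of_partition hF⟩
  · rintro ⟨L₁, L₂, L₃, L₄, h₁, h₂, h₃, h₄, hL⟩
    obtain ⟨σ, a, b, c, d, h | h⟩ := exists_isCanonicalPair_of_partition hF h₁ h₂ h₃ h₄ hL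
    · exact ⟨σ, a, b, c, d, fun x => by rw [hL, ← h.1, ← h.2]⟩
    · exact ⟨σ, a, b, c, d, fun x => by rw [hL, add_comm, ← h.1, ← h.2]⟩
  · rintro ⟨σ, a, b, c, d, h⟩
    exact exists_partition_of_eq_canonical h

/-- A complete quadratic multilinear polynomial `F ∈ ℤ₂[x_1, …, x_5]` in 5 variables
has a twice-linear 2-partition `F = L₁·L₂ + L₃·L₄` (products reduced modulo
`x_i² = x_i`, i.e. equality as functions on `(ℤ₂)⁵`) if and only if, after a
permutation of the variables, `L₁·L₂ = (x₁+x₂+a)(x₂+x₃+b)` and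
`L₃·L₄ = (x₁+x₂+x₃+x₄+c)(x₁+x₂+x₃+x₅+d)` for some constants `a, b, c, d ∈ ℤ₂`. -/
theorem complete_quadratic_five_twice_linear_partition
    (F : MvPolynomial (Fin 5) (ZMod 2))
    (hml : ∀ i : Fin 5, F.degreeOf i ≤ 1)
    (hdeg : F.totalDegree = 2)
    (hcomplete : ∀ i j : Fin 5, i ≠ j →
      F.coeff (Finsupp.single i 1 + Finsupp.single j 1) = 1) :
    ((∃ L₁ L₂ L₃ L₄ : MvPolynomial (Fin 5) (ZMod 2),
        L₁.totalDegree ≤ 1 ∧ L₂.totalDegree ≤ 1 ∧ L₃.totalDegree ≤ 1 ∧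
        L₄.totalDegree ≤ 1 ∧
        ∀ x : Fin 5 → ZMod 2,
          MvPolynomial.eval x F =
            MvPolynomial.eval x L₁ * MvPolynomial.eval x L₂ +
              MvPolynomial.eval x L₃ * MvPolynomial.eval x L₄) ↔
      (∃ (σ : Equiv.Perm (Fin 5)) (a b c d : ZMod 2),
        ∀ x : Fin 5 → ZMod 2,
          MvPolynomial.eval x F =
            (x (σ 0) + x (σ 1) + a) * (x (σ 1) + x (σ 2) + b) +
              (x (σ 0) + x (σ 1) + x (σ 2) + x (σ 3) + c) *
                (x (σ 0) + x (σ 1) + x (σ 2) + x (σ 4) + d))) ∧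
    (∀ L₁ L₂ L₃ L₄ : MvPolynomial (Fin 5) (ZMod 2),
      L₁.totalDegree ≤ 1 → L₂.totalDegree ≤ 1 → L₃.totalDegree ≤ 1 →
      L₄.totalDegree ≤ 1 →
      (∀ x : Fin 5 → ZMod 2,
        MvPolynomial.eval x F =
          MvPolynomial.eval x L₁ * MvPolynomial.eval x L₂ +
            MvPolynomial.eval x L₃ * MvPolynomial.eval x L₄) →
      ∃ (σ : Equiv.Perm (Fin 5)) (a b c d : ZMod 2),
        ((∀ x : Fin 5 → ZMod 2,
            MvPolynomial.eval x L₁ * MvPolynomial.eval x L₂ =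
              (x (σ 0) + x (σ 1) + a) * (x (σ 1) + x (σ 2) + b)) ∧
          (∀ x : Fin 5 → ZMod 2,
            MvPolynomial.eval x L₃ * MvPolynomial.eval x L₄ =
              (x (σ 0) + x (σ 1) + x (σ 2) + x (σ 3) + c) *
                (x (σ 0) + x (σ 1) + x (σ 2) + x (σ 4) + d))) ∨
        ((∀ x : Fin 5 → ZMod 2,
            MvPolynomial.eval x L₃ * MvPolynomial.eval x L₄ =
              (x (σ 0) + x (σ 1) + a) * (x (σ 1) + x (σ 2) + b)) ∧
          (∀ x : Fin 5 → ZMod 2,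
            MvPolynomial.eval x L₁ * MvPolynomial.eval x L₂ =
              (x (σ 0) + x (σ 1) + x (σ 2) + x (σ 3) + c) *
                (x (σ 0) + x (σ 1) + x (σ 2) + x (σ 4) + d)))) := by
  exact complete_quadratic_five_twice_linear_partition_general (fun x => MvPolynomial.eval x F)
    fun i j hij => (mixedDifference_eval hml hij).trans (hcomplete i j hij)
end

section
/- Let n ≥ 4, let F ∈ Z_2[x_1, …, x_n] be a complete cubic multilinear polynomial, let L ∈ Z_2[x_2, …, x_n] have total degree at most 1, and let F'(x_2, …, x_{n+1}) = F(x_{n+1} + L, x_2, …, x_n), reduced to multilinear form. If F' is a complete cubic polynomial in the variables x_2, …, x_{n+1}, then: (i) if n ≥ 5, L is a constant (0 or 1); (ii) if n = 4, L is either a constant ε, or of the form x_i + x_j + ε for some pair {i, j} ⊆ {2, 3, 4} and some constant ε ∈ {0, 1}. -/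
/-!
For `F` over `ZMod 2` with all exponents at most one, the coefficient of `∏ i ∈ T, x_i` is the sum
of the values of `F` at the indicator points of the subsets of `T` (Möbius inversion in
characteristic two). Substituting `x_p + L` for `x_p` adds `L * ∂F/∂x_p` to `F`, so for a set `T` of
`deg F` variables avoiding `p` the coefficient at `T` changes by `∑ i ∈ T, l_i * F_{T - i + p}`,
where `l_i` are the linear coefficients of `L`. When `F` and `F'` are both complete, this gives
`∑ i ∈ T, l_i = 0` for every triple `T` of variables of `L`. With exactly three such variables this
says that `L` has zero or two linear terms; with at least four, summing over the triples inside a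
four-element set shows that every `l_i` vanishes.
-/

open MvPolynomial Finset

section SquarefreeCoefficients

variable {σ R : Type*} [CommSemiring R]

/-- The coefficient in `F` of the squarefree monomial `∏ i ∈ T, x_i`. -/
noncomputable def squarefreeCoeff (F : MvPolynomial σ R) (T : Finset σ) : R :=
  F.coeff (∑ i ∈ T, Finsupp.single i 1)

lemma sum_single_one_apply [DecidableEq σ] (T : Finset σ) (i : σ) :
    (∑ j ∈ T, Finsupp.single j 1 : σ →₀ ℕ) i = if i ∈ T then 1 else 0 := by
  simp [Finsupp.finsetSum_apply, Finsupp.single_apply]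

lemma eq_sum_single_one_iff_support_eq {d : σ →₀ ℕ} (hd : ∀ i, d i ≤ 1) {T : Finset σ} :
    d = ∑ i ∈ T, Finsupp.single i 1 ↔ d.support = T := by
  classical
  simp only [Finsupp.ext_iff, Finset.ext_iff, Finsupp.mem_support_iff, sum_single_one_apply]
  refine forall_congr' fun i ↦ ?_
  have := hd i
  split_ifs with hi <;> simp only [hi, iff_true, iff_false] <;> lia

lemma squarefreeCoeff_eq_zero_of_totalDegree_lt {F : MvPolynomial σ R} {T : Finset σ}
    (h : F.totalDegree < #T) : squarefreeCoeff F T = 0 := by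
  refine coeff_eq_zero_of_totalDegree_lt (h.trans_eq ?_)
  rw [← Finsupp.degree_apply, map_sum]
  simp

lemma squarefreeCoeff_eq_one_of_card_eq_three {F : MvPolynomial σ R}
    (hF : ∀ i j k : σ, i ≠ j → i ≠ k → j ≠ k →
      F.coeff (Finsupp.single i 1 + Finsupp.single j 1 + Finsupp.single k 1) = 1)
    {T : Finset σ} (hT : #T = 3) : squarefreeCoeff F T = 1 := by
  classical
  obtain ⟨i, j, k, hij, hik, hjk, rfl⟩ := card_eq_three.mp hT
  rw [squarefreeCoeff, sum_insert (by simp [hij, hik]), sum_pair hjk, ← add_assoc,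
    hF i j k hij hik hjk]

lemma squarefreeCoeff_rename_equiv {τ : Type*} (e : σ ≃ τ) (F : MvPolynomial σ R) (T : Finset τ) :
    squarefreeCoeff (rename e F) T = squarefreeCoeff F (T.map e.symm.toEmbedding) := by
  rw [squarefreeCoeff, squarefreeCoeff, ← coeff_rename_mapDomain e e.injective F,
    Finsupp.mapDomain_finsetSum, sum_map]
  simp only [Finsupp.mapDomain_single, Equiv.coe_toEmbedding, Equiv.apply_symm_apply]

end SquarefreeCoefficients

section MoebiusInversion

variable {σ R : Type*} [CommSemiring R]

lemma prod_indicator_one_pow (d : σ →₀ ℕ) (S : Finset σ) [Decidable (d.support ⊆ S)] :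
    ∏ i ∈ d.support, Set.indicator (S : Set σ) (1 : σ → R) i ^ d i =
      if d.support ⊆ S then 1 else 0 := by
  classical
  simp only [Set.indicator_apply, mem_coe, Pi.one_apply]
  split_ifs with h
  · exact prod_eq_one fun i hi ↦ by simp [h hi]
  · obtain ⟨i, hi, hiS⟩ := not_subset.mp h
    exact prod_eq_zero hi (by simp [hiS, Finsupp.mem_support_iff.mp hi])

lemma sum_powerset_ite_subset [CharP R 2] [DecidableEq σ] (U T : Finset σ) :
    ∑ S ∈ T.powerset, (if U ⊆ S then (1 : R) else 0) = if U = T then 1 else 0 := by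
  have hIcc : {S ∈ T.powerset | U ⊆ S} = Icc U T := by
    ext S
    simp [and_comm]
  rw [sum_boole, hIcc]
  split_ifs with hUT
  · simp [hUT]
  · by_cases hsub : U ⊆ T
    · have hlt : #U < #T := card_lt_card (hsub.ssubset_of_ne hUT)
      rw [card_Icc_finset hsub, Nat.cast_pow, Nat.cast_ofNat, CharTwo.two_eq_zero,
        zero_pow (by lia)]
    · rw [Icc_eq_empty hsub, card_empty, Nat.cast_zero]

lemma sum_powerset_eval_indicator [CharP R 2] {F : MvPolynomial σ R}
    (hF : ∀ i, F.degreeOf i ≤ 1) (T : Finset σ) :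
    ∑ S ∈ T.powerset, eval (Set.indicator (S : Set σ) 1) F = squarefreeCoeff F T := by
  classical
  simp only [eval_eq, prod_indicator_one_pow]
  rw [sum_comm]
  calc ∑ d ∈ F.support, ∑ S ∈ T.powerset, F.coeff d * (if d.support ⊆ S then 1 else 0)
      = ∑ d ∈ F.support, if d = ∑ i ∈ T, Finsupp.single i 1 then F.coeff d else 0 := by
        refine sum_congr rfl fun d hd ↦ ?_
        have hd1 : ∀ i, d i ≤ 1 := fun i ↦ degreeOf_le_iff.mp (hF i) d hd
        rw [← mul_sum, sum_powerset_ite_subset, mul_ite, mul_one, mul_zero]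
        simp only [eq_sum_single_one_iff_support_eq hd1]
    _ = squarefreeCoeff F T := by
        rw [sum_ite_eq', squarefreeCoeff, ite_eq_left_iff, notMem_support_iff]
        exact Eq.symm

end MoebiusInversion

section AffinePolynomials

variable {σ R : Type*} [CommSemiring R]

lemma eq_C_add_sum_of_totalDegree_le_one [Fintype σ] {L : MvPolynomial σ R}
    (hL : L.totalDegree ≤ 1) :
    L = C (L.coeff 0) + ∑ i, C (L.coeff (Finsupp.single i 1)) * X i := by
  classical
  ext d
  simp only [coeff_add, coeff_C, coeff_sum, coeff_C_mul, coeff_X]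
  obtain hd | hd | hd : d.degree = 0 ∨ d.degree = 1 ∨ 1 < d.degree := by lia
  · obtain rfl := (Finsupp.degree_eq_zero_iff d).mp hd
    simp
  · obtain ⟨i, rfl⟩ : d ∈ Set.range fun i : σ ↦ Finsupp.single i 1 := by
      rwa [Finsupp.range_single_one]
    simp [Finsupp.single_left_inj, eq_comm (a := (0 : σ →₀ ℕ))]
  · have hd0 : 0 ≠ d := by
      rintro rfl
      simp at hd
    have hd1 (i : σ) : Finsupp.single i 1 ≠ d := by
      rintro rfl
      simp at hd
    simp [coeff_eq_zero_of_totalDegree_lt (hL.trans_lt hd), hd0, hd1]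

lemma eval_indicator_of_totalDegree_le_one [Finite σ] {L : MvPolynomial σ R}
    (hL : L.totalDegree ≤ 1) (S : Finset σ) :
    eval (Set.indicator (S : Set σ) 1) L =
      L.coeff 0 + ∑ i ∈ S, L.coeff (Finsupp.single i 1) := by
  classical
  have := Fintype.ofFinite σ
  conv_lhs => rw [eq_C_add_sum_of_totalDegree_le_one hL]
  simp [Set.indicator_apply]

lemma eq_sum_X_add_C_of_totalDegree_le_one [Fintype σ] {L : MvPolynomial σ (ZMod 2)}
    (hL : L.totalDegree ≤ 1) :
    L = ∑ i with L.coeff (Finsupp.single i 1) = 1, X i + C (L.coeff 0) := by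
  have hC (a : ZMod 2) : (C a : MvPolynomial σ (ZMod 2)) = if a = 1 then 1 else 0 := by
    obtain rfl | rfl : a = 0 ∨ a = 1 := by decide +revert
    all_goals simp
  conv_lhs => rw [eq_C_add_sum_of_totalDegree_le_one hL, add_comm]
  simp only [hC (L.coeff (Finsupp.single _ 1)), ite_mul, one_mul, zero_mul, sum_filter]

end AffinePolynomials

section Substitution

variable {σ : Type*} [DecidableEq σ]

lemma eval_update_indicator (F : MvPolynomial σ (ZMod 2)) {p : σ} {S : Finset σ} (hp : p ∉ S)
    (t : ZMod 2) :
    eval (Function.update (Set.indicator (S : Set σ) 1) p t) F =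
      eval (Set.indicator (S : Set σ) 1) F +
        t * (eval (Set.indicator (S : Set σ) 1) F +
          eval (Set.indicator (insert p S : Finset σ) 1) F) := by
  have h_zero : Function.update (Set.indicator (S : Set σ) (1 : σ → ZMod 2)) p 0 =
      Set.indicator (S : Set σ) 1 := by
    simp [hp]
  have h_one : Function.update (Set.indicator (S : Set σ) (1 : σ → ZMod 2)) p 1 =
      Set.indicator (insert p S : Finset σ) 1 := by
    ext i
    by_cases hi : i = p <;> simp [Set.indicator_apply, hi]
  obtain rfl | rfl : t = 0 ∨ t = 1 := by decide +revert
  · rw [h_zero, zero_mul, add_zero]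
  · rw [h_one, one_mul, CharTwo.add_cancel_left]

lemma sum_powerset_affine_mul {R : Type*} [CommRing R] (c : R) (l : σ → R) (g : Finset σ → R)
    (T : Finset σ) :
    ∑ S ∈ T.powerset, (c + ∑ i ∈ S, l i) * g S =
      (c + ∑ i ∈ T, l i) * ∑ S ∈ T.powerset, g S -
        ∑ i ∈ T, l i * ∑ S ∈ (T.erase i).powerset, g S := by
  have h_complement {S : Finset σ} (hS : S ∈ T.powerset) :
      ∑ i ∈ S, l i = ∑ i ∈ T, l i - ∑ i ∈ T \ S, l i := by
    rw [← sum_sdiff (mem_powerset.mp hS), add_sub_cancel_left]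
  have h_swap : ∑ S ∈ T.powerset, ∑ i ∈ T \ S, l i * g S =
      ∑ i ∈ T, ∑ S ∈ (T.erase i).powerset, l i * g S := by
    refine sum_comm' fun S i ↦ ?_
    simp only [mem_powerset, mem_sdiff, subset_erase]
    tauto
  simp only [mul_sum, ← h_swap, ← sum_sub_distrib]
  refine sum_congr rfl fun S hS ↦ ?_
  rw [h_complement hS, ← sum_mul]
  ring

lemma squarefreeCoeff_of_eval_update [Finite σ] {F G L : MvPolynomial σ (ZMod 2)} {p : σ}
    (hF : ∀ i, F.degreeOf i ≤ 1) (hG : ∀ i, G.degreeOf i ≤ 1) (hL : L.totalDegree ≤ 1)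
    (hFG : ∀ x, eval x G = eval (Function.update x p (x p + eval x L)) F)
    {T : Finset σ} (hp : p ∉ T) (hT : F.totalDegree ≤ #T) :
    squarefreeCoeff G T = squarefreeCoeff F T +
      ∑ i ∈ T, L.coeff (Finsupp.single i 1) * squarefreeCoeff F (insert p (T.erase i)) := by
  let f (S : Finset σ) : ZMod 2 := eval (Set.indicator (S : Set σ) 1) F
  let l (i : σ) : ZMod 2 := L.coeff (Finsupp.single i 1)
  have h_derivative {U : Finset σ} (hU : p ∉ U) :
      ∑ S ∈ U.powerset, (f S + f (insert p S)) = squarefreeCoeff F (insert p U) := by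
    rw [← sum_powerset_eval_indicator hF, sum_powerset_insert hU, sum_add_distrib]
  have h_eval {S : Finset σ} (hS : S ∈ T.powerset) :
      eval (Set.indicator (S : Set σ) 1) G =
        f S + (L.coeff 0 + ∑ i ∈ S, l i) * (f S + f (insert p S)) := by
    have hpS : p ∉ S := fun h ↦ hp (mem_powerset.mp hS h)
    rw [hFG, Set.indicator_of_notMem (mem_coe.not.mpr hpS), zero_add,
      eval_indicator_of_totalDegree_le_one hL, eval_update_indicator F hpS]
  have h_top : squarefreeCoeff F (insert p T) = 0 :=
    squarefreeCoeff_eq_zero_of_totalDegree_lt (by rw [card_insert_of_notMem hp]; lia)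
  rw [← sum_powerset_eval_indicator hG, sum_congr rfl fun S hS ↦ h_eval hS, sum_add_distrib,
    sum_powerset_eval_indicator hF, sum_powerset_affine_mul, h_derivative hp, h_top, mul_zero,
    zero_sub, CharTwo.neg_eq]
  simp only [h_derivative fun h ↦ hp (mem_of_mem_erase h), l]

end Substitution

lemma eq_zero_of_forall_card_eq_sum_eq_zero {ι R : Type*} [Ring R] [NoZeroDivisors R]
    {d : ℕ} (hd : (d : R) ≠ 0) {s : Finset ι} (hs : d < #s) {l : ι → R}
    (hl : ∀ T ⊆ s, #T = d → ∑ i ∈ T, l i = 0) {i : ι} (hi : i ∈ s) : l i = 0 := by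
  classical
  obtain ⟨U, hiU, hUs, hU⟩ := exists_subsuperset_card_eq (singleton_subset_iff.mpr hi)
    (by simp : #{i} ≤ d + 1) hs
  have h_const : ∀ j ∈ U, l j = ∑ k ∈ U, l k := fun j hj ↦ by
    rw [← add_sum_erase U l hj, hl _ ((erase_subset j U).trans hUs)
      (by rw [card_erase_of_mem hj, hU, Nat.add_sub_cancel]), add_zero]
  have h_sum : ∑ k ∈ U, l k = (d + 1) * ∑ k ∈ U, l k := by
    conv_lhs => rw [sum_congr rfl h_const, sum_const, hU, nsmul_eq_mul, Nat.cast_add_one]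
  have h_zero : (d : R) * ∑ k ∈ U, l k = 0 := by
    rwa [add_mul, one_mul, right_eq_add] at h_sum
  rw [h_const i (singleton_subset_iff.mp hiU), (mul_eq_zero.mp h_zero).resolve_left hd]

section CyclicRelabelling

lemma finRotate_pred {n : ℕ} {i : Fin (n + 1)} (hi : i ≠ 0) :
    finRotate (n + 1) ⟨i.1 - 1, Nat.lt_of_le_of_lt (Nat.sub_le _ _) i.2⟩ = i := by
  have : i.1 ≠ 0 := Fin.val_ne_zero_iff.mpr hi
  rw [finRotate_of_lt (by lia)]
  exact Fin.ext (Nat.sub_add_cancel (by lia))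

lemma eval_update_of_degreeOf_eq_zero {σ R : Type*} [DecidableEq σ] [CommSemiring R]
    {L : MvPolynomial σ R} {p : σ} (hL : L.degreeOf p = 0) (x : σ → R) (t : R) :
    eval (Function.update x p t) L = eval x L := by
  refine eval₂Hom_congr' rfl (fun i hi _ ↦ Function.update_of_ne ?_ _ _) rfl
  rintro rfl
  exact mem_vars_iff_degreeOf_ne_zero.mp hi hL

/-- The cyclic relabelling puts the new variable `x_{n+1}` in the place of `x_1`, which turns the
substitution into `x_1 ↦ x_1 + L` within a single set of variables. -/
lemma eval_rename_finRotate {R : Type*} [CommSemiring R] {n : ℕ}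
    {F L F' : MvPolynomial (Fin (n + 1)) R} (hL : L.degreeOf 0 = 0)
    (hF' : ∀ y : Fin (n + 1) → R, eval y F' =
      eval (fun i : Fin (n + 1) ↦
        if i = 0 then
          y ⟨n, n.lt_succ_self⟩ +
            eval (fun j : Fin (n + 1) ↦
              if j = 0 then 0 else y ⟨j.1 - 1, Nat.lt_of_le_of_lt (Nat.sub_le _ _) j.2⟩) L
        else y ⟨i.1 - 1, Nat.lt_of_le_of_lt (Nat.sub_le _ _) i.2⟩) F)
    (x : Fin (n + 1) → R) :
    eval x (rename (finRotate (n + 1)) F') =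
      eval (Function.update x 0 (x 0 + eval x L)) F := by
  have hL_arg : (fun j : Fin (n + 1) ↦ if j = 0 then 0 else
      x (finRotate (n + 1) ⟨j.1 - 1, Nat.lt_of_le_of_lt (Nat.sub_le _ _) j.2⟩)) =
      Function.update x 0 0 := by
    ext j
    by_cases hj : j = 0 <;> simp only [hj, if_true, if_false, Function.update_apply]
    rw [finRotate_pred hj]
  rw [eval_rename, hF']
  simp only [Function.comp_apply, hL_arg, eval_update_of_degreeOf_eq_zero hL, finRotate_last']
  congr 2
  ext i
  by_cases hi : i = 0 <;> simp only [hi, if_true, if_false, Function.update_apply]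
  · rfl
  · rw [finRotate_pred hi]

end CyclicRelabelling

section LinearCoefficients

lemma sum_linear_coeff_eq_zero_of_complete {σ : Type*} [Finite σ] [DecidableEq σ]
    {F G L : MvPolynomial σ (ZMod 2)} {p : σ} {d : ℕ}
    (hF : ∀ i, F.degreeOf i ≤ 1) (hG : ∀ i, G.degreeOf i ≤ 1)
    (hFd : F.totalDegree ≤ d) (hL : L.totalDegree ≤ 1)
    (hFG : ∀ x, eval x G = eval (Function.update x p (x p + eval x L)) F)
    (hF_complete : ∀ T : Finset σ, #T = d → squarefreeCoeff F T = 1)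
    (hG_complete : ∀ T : Finset σ, #T = d → squarefreeCoeff G T = 1)
    {T : Finset σ} (hp : p ∉ T) (hT : #T = d) :
    ∑ i ∈ T, L.coeff (Finsupp.single i 1) = 0 := by
  have h_exchange : ∀ i ∈ T, squarefreeCoeff F (insert p (T.erase i)) = 1 := fun i hi ↦ by
    refine hF_complete _ ?_
    rw [card_insert_of_notMem fun h ↦ hp (mem_of_mem_erase h), card_erase_add_one hi, hT]
  have h_coeff := squarefreeCoeff_of_eval_update hF hG hL hFG hp (hFd.trans_eq hT.symm)
  rw [hG_complete T hT, hF_complete T hT,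
    sum_congr rfl fun i hi ↦ by rw [h_exchange i hi, mul_one]] at h_coeff
  exact left_eq_add.mp h_coeff

lemma coeff_single_eq_zero_of_degreeOf_eq_zero {σ R : Type*} [CommSemiring R]
    {L : MvPolynomial σ R} {p : σ} (hL : L.degreeOf p = 0) :
    L.coeff (Finsupp.single p 1) = 0 := by
  by_contra h
  simpa using degreeOf_le_iff.mp hL.le _ (mem_support_iff.mpr h)

lemma eq_C_of_sum_linear_coeff_eq_zero {σ R : Type*} [Fintype σ] [CommRing R]
    [NoZeroDivisors R] {L : MvPolynomial σ R} {p : σ} {d : ℕ} (hd : (d : R) ≠ 0)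
    (hσ : d + 1 < Fintype.card σ) (hL : L.totalDegree ≤ 1) (hp : L.degreeOf p = 0)
    (h_sum : ∀ T : Finset σ, p ∉ T → #T = d → ∑ i ∈ T, L.coeff (Finsupp.single i 1) = 0) :
    L = C (L.coeff 0) := by
  classical
  have h_card : d < #(univ.erase p) := by
    rw [card_erase_of_mem (mem_univ p), card_univ]
    lia
  have h_coeff (i : σ) : L.coeff (Finsupp.single i 1) = 0 := by
    obtain rfl | hi := eq_or_ne i p
    · exact coeff_single_eq_zero_of_degreeOf_eq_zero hp
    · exact eq_zero_of_forall_card_eq_sum_eq_zero hd h_card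
        (fun T hT ↦ h_sum T (subset_erase.mp hT).2) (mem_erase_of_ne_of_mem hi (mem_univ i))
  conv_lhs => rw [eq_C_add_sum_of_totalDegree_le_one hL]
  simp [h_coeff]

lemma even_card_filter_eq_one_iff {ι : Type*} (s : Finset ι) (l : ι → ZMod 2) :
    Even #{i ∈ s | l i = 1} ↔ ∑ i ∈ s, l i = 0 := by
  have h_ite (a : ZMod 2) : (if a = 1 then 1 else 0) = a := by decide +revert
  rw [← ZMod.natCast_eq_zero_iff_even, ← sum_boole]
  simp only [h_ite]

lemma eq_C_or_eq_X_add_X_add_C {σ : Type*} [Fintype σ] [DecidableEq σ]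
    {L : MvPolynomial σ (ZMod 2)} {p : σ} (hσ : Fintype.card σ = 4)
    (hL : L.totalDegree ≤ 1) (hp : L.degreeOf p = 0)
    (h_sum : ∑ i ∈ univ.erase p, L.coeff (Finsupp.single i 1) = 0) :
    (∃ ε, L = C ε) ∨ ∃ i j ε, i ≠ p ∧ j ≠ p ∧ i ≠ j ∧ L = X i + X j + C ε := by
  have hpL := coeff_single_eq_zero_of_degreeOf_eq_zero hp
  have hLA := eq_sum_X_add_C_of_totalDegree_le_one hL
  have h_even : Even #{i | L.coeff (Finsupp.single i 1) = 1} := by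
    rw [even_card_filter_eq_one_iff, ← add_sum_erase univ _ (mem_univ p), hpL, h_sum, add_zero]
  have hpA : ∀ i ∈ ({i | L.coeff (Finsupp.single i 1) = 1} : Finset σ), i ≠ p := by
    rintro i hi rfl
    simp [hpL] at hi
  generalize ({i | L.coeff (Finsupp.single i 1) = 1} : Finset σ) = A at hLA h_even hpA
  have h_card : #A < 4 := hσ ▸ card_lt_univ_of_notMem fun h ↦ hpA p h rfl
  obtain hA | hA : #A = 0 ∨ #A = 2 := by
    obtain ⟨k, hk⟩ := h_even
    lia
  · rw [card_eq_zero.mp hA, sum_empty, zero_add] at hLA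
    exact .inl ⟨_, hLA⟩
  · obtain ⟨i, j, hij, rfl⟩ := card_eq_two.mp hA
    rw [sum_pair hij] at hLA
    exact .inr ⟨i, j, _, hpA i (by simp), hpA j (by simp), hij, hLA⟩

end LinearCoefficients

/-- Let `F ∈ ℤ₂[x_1, …, x_n]` (with `n = m + 4 ≥ 4` variables, variable `x_{i+1}`
having index `i`) be a complete cubic multilinear polynomial, let
`L ∈ ℤ₂[x_2, …, x_n]` have total degree at most `1`, and let
`F'(x_2, …, x_{n+1}) = F(x_{n+1} + L, x_2, …, x_n)` (reduced to multilinear form;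
here `F'` is the multilinear polynomial, in `n` variables where index `i` stands for
`x_{i+2}`, whose values agree with the substituted function).  If `F'` is a complete
cubic polynomial in the variables `x_2, …, x_{n+1}`, then: if `n ≥ 5`, `L` is a
constant; and if `n = 4`, `L` is either a constant `ε` or of the form
`x_i + x_j + ε` for some pair `{i, j} ⊆ {2, 3, 4}` and some `ε ∈ ℤ₂`. -/
theorem complete_cubic_substitution (m : ℕ)
    (F L F' : MvPolynomial (Fin (m + 4)) (ZMod 2))
    (hFml : ∀ i : Fin (m + 4), F.degreeOf i ≤ 1)
    (hF3 : F.totalDegree = 3)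
    (hFcc : ∀ i j k : Fin (m + 4), i ≠ j → i ≠ k → j ≠ k →
      F.coeff (Finsupp.single i 1 + Finsupp.single j 1 + Finsupp.single k 1) = 1)
    (hLdeg : L.totalDegree ≤ 1) (hL0 : L.degreeOf 0 = 0)
    (hF'ml : ∀ i : Fin (m + 4), F'.degreeOf i ≤ 1)
    (hF'def : ∀ y : Fin (m + 4) → ZMod 2,
      MvPolynomial.eval y F' =
        MvPolynomial.eval (fun i : Fin (m + 4) =>
          if i = 0 then
            y ⟨m + 3, by omega⟩ +
              MvPolynomial.eval
                (fun j : Fin (m + 4) =>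
                  if j = 0 then 0
                  else y ⟨j.1 - 1, Nat.lt_of_le_of_lt (Nat.sub_le _ _) j.2⟩) L
          else y ⟨i.1 - 1, Nat.lt_of_le_of_lt (Nat.sub_le _ _) i.2⟩) F)
    (hF'3 : F'.totalDegree = 3)
    (hF'cc : ∀ i j k : Fin (m + 4), i ≠ j → i ≠ k → j ≠ k →
      F'.coeff (Finsupp.single i 1 + Finsupp.single j 1 + Finsupp.single k 1) = 1) :
    (5 ≤ m + 4 → ∃ ε : ZMod 2, L = MvPolynomial.C ε) ∧
    (m + 4 = 4 →
      (∃ ε : ZMod 2, L = MvPolynomial.C ε) ∨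
      ∃ (i j : Fin (m + 4)) (ε : ZMod 2), i ≠ 0 ∧ j ≠ 0 ∧ i ≠ j ∧
        L = MvPolynomial.X i + MvPolynomial.X j + MvPolynomial.C ε) := by
  have hG_eval := eval_rename_finRotate hL0 hF'def
  have hG_ml : ∀ i, (rename (finRotate (m + 4)) F').degreeOf i ≤ 1 :=
    (finRotate (m + 4)).surjective.forall.mpr fun i ↦
      (degreeOf_rename_of_injective (finRotate (m + 4)).injective i).trans_le (hF'ml i)
  have hG_complete (T) (hT : #T = 3) :
      squarefreeCoeff (rename (finRotate (m + 4)) F') T = 1 := by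
    rw [squarefreeCoeff_rename_equiv]
    exact squarefreeCoeff_eq_one_of_card_eq_three hF'cc (by rw [card_map, hT])
  have h_sum : ∀ T : Finset (Fin (m + 4)), 0 ∉ T → #T = 3 →
      ∑ i ∈ T, L.coeff (Finsupp.single i 1) = 0 := fun T ↦
    sum_linear_coeff_eq_zero_of_complete hFml hG_ml hF3.le hLdeg hG_eval
      (fun _ ↦ squarefreeCoeff_eq_one_of_card_eq_three hFcc) hG_complete
  refine ⟨fun hm ↦ ⟨_, eq_C_of_sum_linear_coeff_eq_zero (by decide : ((3 : ℕ) : ZMod 2) ≠ 0)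
    (by rw [Fintype.card_fin]; lia) hLdeg hL0 h_sum⟩, fun hm ↦ ?_⟩
  exact eq_C_or_eq_X_add_X_add_C ((Fintype.card_fin _).trans hm) hLdeg hL0
    (h_sum _ (notMem_erase 0 univ) (by simp [hm]))
end
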